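/- Fix integers j, k ≥ 1, and l with |l| ≤ k+1 and l ≡ k+1 (mod 2), and let σ be as defined. If S is any one of the three sets [j+l−2k+4, j+l+2k−4]_4, [j+l−2k+2, j+l+σ−2]_2, or [j+l+σ+2, j+l+2k−2]_2, then F_{j,k}|_S ≠ 0. -/

import Mathlib

/-!
Labels in `S` have the parity of the labels of `Q_{k+1}`, never that of `Q_k`. Call an element `x`
of `P_k` free in an order ideal `I` if it can be added to or removed from `I` on its own; for `x`
in `Q_{k+1}` this depends only on `I ∩ Q_k`. Toggling a free element with label in `S`, chosen from
`I ∩ Q_k` alone, is a sign-reversing involution on the ideals that have one (`sum_not_good`). What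
is left in `F|_S` is a sum over the good ideals, those without a free element labelled in `S`; the
sign of a good ideal is determined by its part in `Q_k`. Therefore `F|_S ≠ 0` as soon as good ideals
exist and are closed under intersection: those with the smallest number of elements in `Q_k` then
share their part in `Q_k`, hence their sign, and the coefficient they contribute to survives
(`ne_zero_of_good`).

The part of an ideal in `Q_k` is the corner sum (height) function of a `k × k` alternating sign
matrix, whose entries are indexed by the positions `(r, s)` of `Q_{k+1}`; a free element over
`(r, s)` exists exactly when the entry there is `1`. For the sets `S` at hand the positions
labelled in `S` form initial segments of lines (rows or columns) of the matrix, read in a suitable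
direction. No entry of an initial segment is `1` if and only if all its entries vanish, i.e. all
partial sums along it vanish. Each of these is an implication between membership conditions at two
neighbouring corners (`EdgeZero`), and such implications are inherited by intersections
(`ne_zero_of_height`). Existence of a good ideal amounts to an alternating sign matrix vanishing on
the segments, and explicit corner sums provide one for each type of progression
(`ne_zero_step_four`, `ne_zero_step_two`).
-/

open MvPolynomial
open scoped Classical

noncomputable section

/-- The set `Q_k`: triples `(r,s,t)` with `|r|+|s| ≤ k-2`, `r+s ≡ k (mod 2)`,
`t ≡ 2|s|-k+2 (mod 4)` and `2|s|-k+2 ≤ t ≤ k-2-2|r|`. -/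
def pentagramQ (k : ℤ) : Set (ℤ × ℤ × ℤ) :=
  {p | |p.1| + |p.2.1| ≤ k - 2 ∧ (2 : ℤ) ∣ (p.1 + p.2.1 - k) ∧
    (4 : ℤ) ∣ (p.2.2 - (2 * |p.2.1| - k + 2)) ∧
    2 * |p.2.1| - k + 2 ≤ p.2.2 ∧ p.2.2 ≤ k - 2 - 2 * |p.1|}

/-- The set `P_k = Q_k ∪ Q_{k+1}`. -/
def pentagramP (k : ℤ) : Set (ℤ × ℤ × ℤ) := pentagramQ k ∪ pentagramQ (k + 1)

/-- The covering relation: `(r',s',t')` covers `(r,s,t)` iff `t' = t + 1` and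
`|r'-r| + |s'-s| = 1`. -/
def pentagramCovers (x y : ℤ × ℤ × ℤ) : Prop :=
  y.2.2 = x.2.2 + 1 ∧ |y.1 - x.1| + |y.2.1 - x.2.1| = 1

/-- The partial order on `P_k`: the reflexive-transitive closure of the covering
relation within `P_k`. -/
def pentagramLe (k : ℤ) : (ℤ × ℤ × ℤ) → (ℤ × ℤ × ℤ) → Prop :=
  Relation.ReflTransGen
    (fun x y => x ∈ pentagramP k ∧ y ∈ pentagramP k ∧ pentagramCovers x y)

/-- An order ideal of `P_k`: a downward-closed subset of `P_k`. -/
def IsPentagramOrderIdeal (k : ℤ) (I : Set (ℤ × ℤ × ℤ)) : Prop :=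
  I ⊆ pentagramP k ∧ ∀ x y, y ∈ I → pentagramLe k x y → x ∈ I

/-- `P_k` realized as a `Finset` (it is contained in the displayed finite box). -/
def pentagramPFinset (k : ℤ) : Finset (ℤ × ℤ × ℤ) :=
  ((Finset.Icc (-(k-1)) (k-1)) ×ˢ (Finset.Icc (-(k-1)) (k-1)) ×ˢ
    (Finset.Icc (-(k-1)) (k-1))).filter (fun p => p ∈ pentagramP k)

/-- The F-polynomial `F_{j,k} = Σ_{order ideals I of P_k} Π_{(r,s,t) ∈ I} y_{3r+s+j}`,
as an element of `ℤ[y_i : i ∈ ℤ] = MvPolynomial ℤ ℤ`. -/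
def pentagramF (j k : ℤ) : MvPolynomial ℤ ℤ :=
  ∑ I ∈ (pentagramPFinset k).powerset.filter
      (fun I : Finset (ℤ × ℤ × ℤ) => IsPentagramOrderIdeal k (↑I : Set (ℤ × ℤ × ℤ))),
    ∏ p ∈ I, X (3 * p.1 + p.2.1 + j)

/-- The ring endomorphism of `ℤ[y_i : i ∈ ℤ]` sending `y_i ↦ -1` for `i ∈ S`
and fixing the other variables; `substNeg S F` is `F|_S`. -/
def substNeg (S : Set ℤ) : MvPolynomial ℤ ℤ →+* MvPolynomial ℤ ℤ :=
  (MvPolynomial.aeval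
    (fun i : ℤ => if i ∈ S then (-1 : MvPolynomial ℤ ℤ) else X i)).toRingHom

/-- The arithmetic progression `[a,b]_d = {a, a+d, a+2d, …, b}` (as a subset of `ℤ`). -/
def AP (a b d : ℤ) : Set ℤ := {x | a ≤ x ∧ x ≤ b ∧ d ∣ (x - a)}

/-- The shift `σ`: `0` if `k` is odd, `-2` if `k` is even and `l+k ≡ 1 (mod 4)`,
and `2` if `k` is even and `l+k ≡ 3 (mod 4)`. -/
def pentagramSigma (k l : ℤ) : ℤ :=
  if k % 2 = 1 then 0 else if (l + k) % 4 = 1 then -2 else 2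

/-! ### Ideals and covering relations -/

lemma ideal_iff (k : ℤ) (I : Set (ℤ × ℤ × ℤ)) :
    IsPentagramOrderIdeal k I ↔ I ⊆ pentagramP k ∧
      ∀ x y, y ∈ I → x ∈ pentagramP k → pentagramCovers x y → x ∈ I := by
  constructor
  · rintro ⟨h1, h2⟩
    exact ⟨h1, fun x y hy hx hc => h2 x y hy (Relation.ReflTransGen.single ⟨hx, h1 hy, hc⟩)⟩
  · rintro ⟨h1, h2⟩
    refine ⟨h1, fun x y hy hxy => ?_⟩
    induction hxy using Relation.ReflTransGen.head_induction_on with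
    | refl => exact hy
    | head h _ ih => exact h2 _ _ ih h.1 h.2.2

lemma mem_PFinset (k : ℤ) (p : ℤ × ℤ × ℤ) : p ∈ pentagramPFinset k ↔ p ∈ pentagramP k := by
  obtain ⟨r, s, t⟩ := p
  simp only [pentagramPFinset, Finset.mem_filter, Finset.mem_product, Finset.mem_Icc]
  refine ⟨fun h => h.2, fun h => ⟨?_, h⟩⟩
  simp only [pentagramP, pentagramQ, Set.mem_union, Set.mem_ofPred_eq, abs_eq_max_neg] at h
  omega

/-- Elements of `P_k` in the part `Q_k`, recognised by the parity of `r + s`. -/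
def parQ (k : ℤ) (p : ℤ × ℤ × ℤ) : Prop := (2 : ℤ) ∣ (p.1 + p.2.1 - k)

lemma covers_cases {r s t r' s' t' : ℤ} (h : pentagramCovers (r, s, t) (r', s', t')) :
    t' = t + 1 ∧ ((r' = r + 1 ∧ s' = s) ∨ (r' = r - 1 ∧ s' = s) ∨
      (r' = r ∧ s' = s + 1) ∨ (r' = r ∧ s' = s - 1)) := by
  simp only [pentagramCovers, abs_eq_max_neg] at h
  omega

lemma covers_par {k : ℤ} {x y : ℤ × ℤ × ℤ} (h : pentagramCovers x y) :
    parQ k x ↔ ¬ parQ k y := by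
  obtain ⟨r, s, t⟩ := x
  obtain ⟨r', s', t'⟩ := y
  have := covers_cases h
  simp only [parQ]
  omega

/-- `x` can be added to or removed from `I` without touching the other elements. -/
def IsFree (k : ℤ) (I : Set (ℤ × ℤ × ℤ)) (x : ℤ × ℤ × ℤ) : Prop :=
  x ∈ pentagramP k ∧ (∀ y ∈ pentagramP k, pentagramCovers y x → y ∈ I) ∧
    (∀ y ∈ pentagramP k, pentagramCovers x y → y ∉ I)

/-- No element with label in `S` is free in `I`. -/
def IsGood (j k : ℤ) (S : Set ℤ) (I : Set (ℤ × ℤ × ℤ)) : Prop :=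
  ∀ x, 3 * x.1 + x.2.1 + j ∈ S → ¬ IsFree k I x

/-- The finite set of order ideals of `P_k`. -/
def ideals (k : ℤ) : Finset (Finset (ℤ × ℤ × ℤ)) :=
  (pentagramPFinset k).powerset.filter
      (fun I : Finset (ℤ × ℤ × ℤ) => IsPentagramOrderIdeal k (↑I : Set (ℤ × ℤ × ℤ)))

lemma mem_ideals (k : ℤ) (I : Finset (ℤ × ℤ × ℤ)) :
    I ∈ ideals k ↔ (∀ x ∈ I, x ∈ pentagramP k) ∧
      ∀ x y, y ∈ I → x ∈ pentagramP k → pentagramCovers x y → x ∈ I := by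
  have h : IsPentagramOrderIdeal k (↑I : Set (ℤ × ℤ × ℤ)) ↔ _ := ideal_iff k I
  simp only [ideals, Finset.mem_filter, Finset.mem_powerset, h]
  constructor
  · rintro ⟨_, h2, h3⟩
    exact ⟨fun x hx => h2 hx, h3⟩
  · rintro ⟨h2, h3⟩
    exact ⟨fun x hx => (mem_PFinset k x).2 (h2 x hx), fun x hx => h2 x hx, h3⟩

/-- The sign that the elements with label in `S` contribute to the term of `I`. -/
def sgn (j : ℤ) (S : Set ℤ) (I : Finset (ℤ × ℤ × ℤ)) : ℤ :=
  ∏ p ∈ I, if 3 * p.1 + p.2.1 + j ∈ S then -1 else 1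

lemma sgn_ne_zero (j : ℤ) (S : Set ℤ) (I : Finset (ℤ × ℤ × ℤ)) : sgn j S I ≠ 0 := by
  unfold sgn
  refine Finset.prod_ne_zero_iff.2 fun p _ => ?_
  split_ifs <;> norm_num

/-- Reduction of `F|_S ≠ 0` to a signed count: send the variables labelling `Q_k` to one
indeterminate, those outside `S` labelling `Q_{k+1}` to `1`, and look at one coefficient. -/
lemma ne_zero_of_count (j k : ℤ) (S : Set ℤ) (hS : ∀ c ∈ S, ¬ (2 : ℤ) ∣ (c - j - k)) (d : ℕ)
    (h : ∑ I ∈ (ideals k).filter (fun I => (I.filter (parQ k)).card = d), sgn j S I ≠ 0) :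
    substNeg S (pentagramF j k) ≠ 0 := by
  intro h0
  apply h
  let φ : MvPolynomial ℤ ℤ →+* Polynomial ℤ :=
    (MvPolynomial.aeval (fun i : ℤ =>
      if (2 : ℤ) ∣ (i - j - k) then (Polynomial.X : Polynomial ℤ) else 1)).toRingHom
  have key : φ (substNeg S (pentagramF j k)) =
      ∑ I ∈ ideals k, Polynomial.C (sgn j S I) * Polynomial.X ^ (I.filter (parQ k)).card := by
    unfold pentagramF
    rw [map_sum, map_sum]
    refine Finset.sum_congr rfl fun I _ => ?_
    rw [map_prod, map_prod, sgn, map_prod, ← Finset.prod_const, Finset.prod_filter,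
      ← Finset.prod_mul_distrib]
    refine Finset.prod_congr rfl fun p _ => ?_
    have hpq : (2 : ℤ) ∣ (3 * p.1 + p.2.1 + j - j - k) ↔ parQ k p := by
      unfold parQ; omega
    by_cases hp : 3 * p.1 + p.2.1 + j ∈ S
    · have h2 := hS _ hp
      rw [hpq] at h2
      simp [φ, substNeg, hp, h2]
    · have e : φ (substNeg S (X (3 * p.1 + p.2.1 + j))) =
          if (2 : ℤ) ∣ (3 * p.1 + p.2.1 + j - j - k) then Polynomial.X else 1 := by
        simp only [φ, substNeg, AlgHom.toRingHom_eq_coe, RingHom.coe_coe, aeval_X, hp, if_false]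
      rw [e]
      by_cases h2 : parQ k p <;> simp only [hpq, hp, h2, if_true, if_false] <;> simp
  rw [h0, map_zero] at key
  have := congrArg (fun q => Polynomial.coeff q d) key
  simp only [Polynomial.coeff_zero, Polynomial.finsetSum_coeff, Polynomial.coeff_C_mul,
    Polynomial.coeff_X_pow, mul_ite, mul_one, mul_zero] at this
  rw [Finset.sum_filter]
  refine Eq.trans (Finset.sum_congr rfl fun I _ => ?_) this.symm
  simp only [eq_comm (a := d)]

lemma isFree_filter (k : ℤ) (I : Finset (ℤ × ℤ × ℤ)) (x : ℤ × ℤ × ℤ) (hx : ¬ parQ k x) :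
    IsFree k (↑(I.filter (parQ k))) x ↔ IsFree k ↑I x := by
  unfold IsFree
  refine and_congr Iff.rfl (and_congr ?_ ?_)
  · refine forall₃_congr fun y _ hc => ?_
    have := (covers_par (k := k) hc).2 hx
    simp [this]
  · refine forall₃_congr fun y _ hc => ?_
    have : parQ k y := by
      by_contra h; exact hx ((covers_par (k := k) hc).2 h)
    simp [this]

/-- Toggling membership of one element. -/
def toggle (I : Finset (ℤ × ℤ × ℤ)) (x : ℤ × ℤ × ℤ) : Finset (ℤ × ℤ × ℤ) :=
  if x ∈ I then I.erase x else insert x I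

lemma mem_toggle (I : Finset (ℤ × ℤ × ℤ)) (x y : ℤ × ℤ × ℤ) :
    y ∈ toggle I x ↔ (y = x ∧ x ∉ I) ∨ (y ≠ x ∧ y ∈ I) := by
  unfold toggle
  split_ifs with h <;> by_cases hy : y = x <;> simp_all

lemma sgn_toggle (j : ℤ) (S : Set ℤ) (I : Finset (ℤ × ℤ × ℤ)) (x : ℤ × ℤ × ℤ)
    (hx : 3 * x.1 + x.2.1 + j ∈ S) : sgn j S (toggle I x) = - sgn j S I := by
  have hins : ∀ K : Finset (ℤ × ℤ × ℤ), x ∉ K → sgn j S (insert x K) = - sgn j S K := by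
    intro K hK
    unfold sgn
    rw [Finset.prod_insert hK, if_pos hx]
    ring
  unfold toggle
  split_ifs with h
  · have := hins (I.erase x) (Finset.notMem_erase x I)
    rw [Finset.insert_erase h] at this
    rw [this, neg_neg]
  · exact hins I h

lemma toggle_mem_ideals (k : ℤ) (I : Finset (ℤ × ℤ × ℤ)) (x : ℤ × ℤ × ℤ)
    (hI : I ∈ ideals k) (hx : IsFree k ↑I x) : toggle I x ∈ ideals k := by
  rw [mem_ideals] at hI ⊢
  obtain ⟨h1, h2⟩ := hI
  obtain ⟨hxP, hlow, hup⟩ := hx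
  constructor
  · intro y hy
    rw [mem_toggle] at hy
    rcases hy with ⟨rfl, _⟩ | ⟨_, hy⟩
    · exact hxP
    · exact h1 y hy
  · intro z y hy hz hc
    rw [mem_toggle] at hy ⊢
    have hirr : z ≠ y := by
      rintro rfl
      have := hc.1
      omega
    rcases hy with ⟨rfl, hy⟩ | ⟨hne, hy⟩
    · exact Or.inr ⟨hirr, hlow z hz hc⟩
    · have hzx : z ≠ x := by
        rintro rfl
        exact hup y (h1 y hy) hc hy
      exact Or.inr ⟨hzx, h2 z y hy hz hc⟩

/-- Toggling a free element chosen from `I ∩ Q_k` alone cancels the ideals that are not good. -/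
lemma sum_not_good (j k : ℤ) (S : Set ℤ) (hS : ∀ c ∈ S, ¬ (2 : ℤ) ∣ (c - j - k)) (d : ℕ) :
    ∑ I ∈ (ideals k).filter (fun I : Finset (ℤ × ℤ × ℤ) =>
        (I.filter (parQ k)).card = d ∧ ¬ IsGood j k S ↑I),
      sgn j S I = 0 := by
  have hSp : ∀ x : ℤ × ℤ × ℤ, 3 * x.1 + x.2.1 + j ∈ S → ¬ parQ k x := by
    intro x hx
    have := hS _ hx
    unfold parQ
    omega
  let pick : Finset (ℤ × ℤ × ℤ) → ℤ × ℤ × ℤ := fun J =>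
    Classical.epsilon (fun x => 3 * x.1 + x.2.1 + j ∈ S ∧ IsFree k ↑J x)
  have hpick : ∀ I : Finset (ℤ × ℤ × ℤ), ¬ IsGood j k S ↑I →
      3 * (pick (I.filter (parQ k))).1 + (pick (I.filter (parQ k))).2.1 + j ∈ S ∧
        IsFree k ↑I (pick (I.filter (parQ k))) := by
    intro I hI
    unfold IsGood at hI
    push Not at hI
    obtain ⟨x, hx, hf⟩ := hI
    have h := Classical.epsilon_spec
      (p := fun x : ℤ × ℤ × ℤ => 3 * x.1 + x.2.1 + j ∈ S ∧ IsFree k ↑(I.filter (parQ k)) x)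
      ⟨x, hx, (isFree_filter k I x (hSp x hx)).2 hf⟩
    exact ⟨h.1, (isFree_filter k I _ (hSp _ h.1)).1 h.2⟩
  have hfil : ∀ (I : Finset (ℤ × ℤ × ℤ)) x, ¬ parQ k x →
      (toggle I x).filter (parQ k) = I.filter (parQ k) := by
    intro I x hx
    ext y
    simp only [Finset.mem_filter, mem_toggle]
    constructor
    · rintro ⟨⟨rfl, _⟩ | ⟨_, h⟩, hy⟩
      · exact absurd hy hx
      · exact ⟨h, hy⟩
    · rintro ⟨h, hy⟩
      exact ⟨Or.inr ⟨fun e => hx (e ▸ hy), h⟩, hy⟩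
  refine Finset.sum_involution (fun I _ => toggle I (pick (I.filter (parQ k)))) ?_ ?_ ?_ ?_
  · intro I hI
    rw [Finset.mem_filter] at hI
    rw [sgn_toggle j S I _ (hpick I hI.2.2).1]
    ring
  · intro I hI _ heq
    rw [Finset.mem_filter] at hI
    have h := mem_toggle I (pick (I.filter (parQ k))) (pick (I.filter (parQ k)))
    rw [heq] at h
    simp at h
  · intro I hI
    rw [Finset.mem_filter] at hI ⊢
    obtain ⟨hc, hf⟩ := hpick I hI.2.2
    refine ⟨toggle_mem_ideals k I _ hI.1 hf, ?_, ?_⟩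
    · rw [hfil I _ (hSp _ hc)]
      exact hI.2.1
    · intro hg
      refine hg _ hc ?_
      rw [← isFree_filter k _ _ (hSp _ hc), hfil I _ (hSp _ hc), isFree_filter k _ _ (hSp _ hc)]
      exact hf
  · intro I hI
    rw [Finset.mem_filter] at hI
    obtain ⟨hc, hf⟩ := hpick I hI.2.2
    rw [hfil I _ (hSp _ hc)]
    ext y
    rw [mem_toggle, mem_toggle, mem_toggle]
    by_cases hy : y = pick (I.filter (parQ k)) <;> simp [hy]

/-- In a good ideal the elements with label in `S` are determined by the part in `Q_k`. -/
lemma good_mem_iff (j k : ℤ) (S : Set ℤ) (I : Finset (ℤ × ℤ × ℤ)) (hI : I ∈ ideals k)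
    (hg : IsGood j k S ↑I) (x : ℤ × ℤ × ℤ) (hx : 3 * x.1 + x.2.1 + j ∈ S) (hp : ¬ parQ k x) :
    x ∈ I ↔ x ∈ pentagramP k ∧ ∃ y ∈ I.filter (parQ k), pentagramCovers x y := by
  obtain ⟨h1, h2⟩ := (mem_ideals k I).1 hI
  constructor
  · intro hxI
    refine ⟨h1 x hxI, ?_⟩
    by_contra hno
    push Not at hno
    refine hg x hx ⟨h1 x hxI, fun y hy hc => h2 y x hxI hy hc, fun y _ hc hyI => ?_⟩
    have : parQ k y := by
      by_contra h; exact hp ((covers_par (k := k) hc).2 h)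
    exact hno y (Finset.mem_filter.2 ⟨hyI, this⟩) hc
  · rintro ⟨hxP, y, hy, hc⟩
    exact h2 x y (Finset.mem_filter.1 hy).1 hxP hc

lemma sgn_eq_of_good (j k : ℤ) (S : Set ℤ) (hS : ∀ c ∈ S, ¬ (2 : ℤ) ∣ (c - j - k))
    (I I' : Finset (ℤ × ℤ × ℤ)) (hI : I ∈ ideals k) (hI' : I' ∈ ideals k)
    (hg : IsGood j k S ↑I) (hg' : IsGood j k S ↑I')
    (h : I.filter (parQ k) = I'.filter (parQ k)) : sgn j S I = sgn j S I' := by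
  unfold sgn
  rw [← Finset.prod_filter, ← Finset.prod_filter]
  congr 1
  ext x
  simp only [Finset.mem_filter]
  refine and_congr_left fun hx => ?_
  have hp : ¬ parQ k x := by
    have := hS _ hx
    unfold parQ
    omega
  rw [good_mem_iff j k S I hI hg x hx hp, good_mem_iff j k S I' hI' hg' x hx hp, h]

lemma inter_mem_ideals (k : ℤ) (I I' : Finset (ℤ × ℤ × ℤ)) (hI : I ∈ ideals k)
    (hI' : I' ∈ ideals k) : I ∩ I' ∈ ideals k := by
  rw [mem_ideals] at *
  refine ⟨fun x hx => hI.1 x (Finset.mem_inter.1 hx).1, fun x y hy hx hc => ?_⟩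
  rw [Finset.mem_inter] at *
  exact ⟨hI.2 x y hy.1 hx hc, hI'.2 x y hy.2 hx hc⟩

/-- If good ideals exist and are closed under intersection, then those with the fewest elements
in `Q_k` all share the same part in `Q_k`, hence the same sign, and `F|_S ≠ 0`. -/
lemma ne_zero_of_good (j k : ℤ) (S : Set ℤ) (hS : ∀ c ∈ S, ¬ (2 : ℤ) ∣ (c - j - k))
    (hex : ∃ I ∈ ideals k, IsGood j k S ↑I)
    (hinter : ∀ I ∈ ideals k, ∀ I' ∈ ideals k, IsGood j k S ↑I → IsGood j k S ↑I' →
      IsGood j k S ↑(I ∩ I')) :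
    substNeg S (pentagramF j k) ≠ 0 := by
  obtain ⟨I₁, hI₁, hg₁⟩ := hex
  obtain ⟨I₀, hI₀, hmin⟩ := Finset.exists_min_image
    ((ideals k).filter (fun I : Finset (ℤ × ℤ × ℤ) => IsGood j k S ↑I))
    (fun I => (I.filter (parQ k)).card)
    ⟨I₁, Finset.mem_filter.2 ⟨hI₁, hg₁⟩⟩
  rw [Finset.mem_filter] at hI₀
  obtain ⟨hI₀, hg₀⟩ := hI₀
  refine ne_zero_of_count j k S hS (I₀.filter (parQ k)).card ?_
  rw [← Finset.sum_filter_add_sum_filter_not _ (fun I : Finset (ℤ × ℤ × ℤ) => IsGood j k S ↑I),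
    Finset.filter_filter, Finset.filter_filter, sum_not_good j k S hS, add_zero]
  have hsame : ∀ I ∈ (ideals k).filter (fun I : Finset (ℤ × ℤ × ℤ) =>
      (I.filter (parQ k)).card = (I₀.filter (parQ k)).card ∧ IsGood j k S ↑I),
      sgn j S I = sgn j S I₀ := by
    intro I hI
    rw [Finset.mem_filter] at hI
    obtain ⟨hI, hcard, hg⟩ := hI
    refine sgn_eq_of_good j k S hS I I₀ hI hI₀ hg hg₀ ?_
    have hm := hmin (I ∩ I₀) (Finset.mem_filter.2
      ⟨inter_mem_ideals k I I₀ hI hI₀, hinter I hI I₀ hI₀ hg hg₀⟩)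
    have e1 : (I ∩ I₀).filter (parQ k) = I₀.filter (parQ k) :=
      Finset.eq_of_subset_of_card_le
        (Finset.filter_subset_filter _ Finset.inter_subset_right) hm
    have e2 : (I ∩ I₀).filter (parQ k) = I.filter (parQ k) :=
      Finset.eq_of_subset_of_card_le
        (Finset.filter_subset_filter _ Finset.inter_subset_left) (hcard.trans_le hm)
    rw [← e2, e1]
  rw [Finset.sum_congr rfl hsame, Finset.sum_const, nsmul_eq_mul]
  refine mul_ne_zero ?_ (sgn_ne_zero j S I₀)
  have : 0 < ((ideals k).filter (fun I : Finset (ℤ × ℤ × ℤ) =>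
      (I.filter (parQ k)).card = (I₀.filter (parQ k)).card ∧ IsGood j k S ↑I)).card :=
    Finset.card_pos.2 ⟨I₀, Finset.mem_filter.2 ⟨hI₀, rfl, hg₀⟩⟩
  exact_mod_cast this.ne'

/-! ### Corner points, edges and height functions -/

/-- The ideal `I` at the corner `(r, s)`, extended to all heights: everything below the range
of `Q_k` counts as a member. -/
def MemExt (k : ℤ) (I : Set (ℤ × ℤ × ℤ)) (r s t : ℤ) : Prop :=
  t < 2 * |s| - k + 2 ∨ (r, s, t) ∈ I

/-- Heights at diagonally adjacent corners differ by at most `2`. -/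
lemma ext_step {k : ℤ} {I : Finset (ℤ × ℤ × ℤ)} (hI : I ∈ ideals k) {r s t ε δ : ℤ}
    (hε : ε = 1 ∨ ε = -1) (hδ : δ = 1 ∨ δ = -1) (hrs : (2 : ℤ) ∣ (r + s - k))
    (ht : (4 : ℤ) ∣ (t - (2 * |s| - k + 2))) (h : MemExt k ↑I r s t) :
    MemExt k ↑I (r + ε) (s + δ) (t - 2) := by
  obtain ⟨h1, h2⟩ := (mem_ideals k I).1 hI
  unfold MemExt at *
  rcases h with h | h
  · left
    simp only [abs_eq_max_neg] at *
    omega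
  · by_cases hlo : t - 2 < 2 * |s + δ| - k + 2
    · exact Or.inl hlo
    right
    rw [Finset.mem_coe] at *
    have hP := h1 _ h
    have hx : (r + ε, s, t - 1) ∈ I := by
      refine h2 _ _ h ?_ ?_
      · right
        rcases hP with hP | hP <;>
        · simp only [pentagramQ, Set.mem_ofPred_eq, abs_eq_max_neg] at *
          omega
      · simp only [pentagramCovers, abs_eq_max_neg]
        omega
    refine h2 _ _ hx ?_ ?_
    · left
      rcases hP with hP | hP <;>
      · simp only [pentagramQ, Set.mem_ofPred_eq, abs_eq_max_neg] at *
        omega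
    · simp only [pentagramCovers, abs_eq_max_neg]
      omega

/-- At a corner, `MemExt` fails above the range of `Q_k`. -/
lemma ext_range {k : ℤ} {I : Finset (ℤ × ℤ × ℤ)} (hI : I ∈ ideals k) {r s t : ℤ}
    (hrs : (2 : ℤ) ∣ (r + s - k)) (h : MemExt k ↑I r s t) :
    t < 2 * |s| - k + 2 ∨ (|r| + |s| ≤ k - 2 ∧ t ≤ k - 2 - 2 * |r| ∧ 2 * |s| - k + 2 ≤ t) := by
  obtain ⟨h1, -⟩ := (mem_ideals k I).1 hI
  rcases h with h | h
  · exact Or.inl h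
  · right
    rcases h1 _ h with hP | hP <;> simp only [pentagramQ, Set.mem_ofPred_eq] at hP
    · omega
    · omega

/-- If, around a position `(r, s)`, both corners in the `s`-direction reach height `t - 1` and
neither corner in the `r`-direction reaches `t + 1`, then `(r, s, t)` is free. -/
lemma isFree_of_ext {k : ℤ} {I : Finset (ℤ × ℤ × ℤ)} (hI : I ∈ ideals k) {r s t : ℤ}
    (hrs : (2 : ℤ) ∣ (r + s - (k + 1))) (hpos : |r| + |s| ≤ k - 1)
    (ht : (4 : ℤ) ∣ (t - (2 * |s| - k + 1)))
    (hd1 : MemExt k ↑I r (s + 1) (t - 1)) (hd2 : MemExt k ↑I r (s - 1) (t - 1))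
    (hu1 : ¬ MemExt k ↑I (r + 1) s (t + 1)) (hu2 : ¬ MemExt k ↑I (r - 1) s (t + 1)) :
    IsFree k ↑I (r, s, t) := by
  have r1 := ext_range hI (by omega) hd1
  have r2 := ext_range hI (by omega) hd2
  unfold MemExt at *
  push Not at hu1 hu2
  refine ⟨?_, ?_, ?_⟩
  · right
    have := hu1.1
    clear hd1 hd2 hu1 hu2
    simp only [pentagramQ, Set.mem_ofPred_eq]
    refine ⟨by omega, by omega, ?_, by omega, ?_⟩ <;>
    · simp only [abs_eq_max_neg] at *
      omega
  · rintro ⟨r', s', t'⟩ hP hc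
    obtain ⟨rfl, hc⟩ := covers_cases hc
    have e : (r' = r ∧ (s' = s + 1 ∨ s' = s - 1)) ∧ 2 * |s'| - k + 2 ≤ t' := by
      clear hd1 hd2 hu1 hu2 r1 r2
      rcases hP with hP | hP <;>
      · simp only [pentagramQ, Set.mem_ofPred_eq, abs_eq_max_neg] at *
        omega
    obtain ⟨⟨rfl, rfl | rfl⟩, hlo⟩ := e
    · rw [add_sub_cancel_right] at hd1
      exact hd1.resolve_left (by omega)
    · rw [add_sub_cancel_right] at hd2
      exact hd2.resolve_left (by omega)
  · rintro ⟨r', s', t'⟩ hP hc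
    obtain ⟨rfl, hc⟩ := covers_cases hc
    have e : (r' = r + 1 ∨ r' = r - 1) ∧ s' = s := by
      clear hd1 hd2 hu1 hu2 r1 r2
      rcases hP with hP | hP <;>
      · simp only [pentagramQ, Set.mem_ofPred_eq, abs_eq_max_neg] at *
        omega
    obtain ⟨rfl | rfl, rfl⟩ := e
    · exact hu1.2
    · exact hu2.2

/-- The height of `I` at `(r + ε, s)` exceeds the height at `(r, s + δ)`. In matrix terms, the
partial sum of the alternating sign matrix entries up to and including position `(r, s)`, taken
in the direction `(ε, δ)`, vanishes. -/
def EdgeZero (k : ℤ) (I : Set (ℤ × ℤ × ℤ)) (r s ε δ : ℤ) : Prop :=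
  ∀ t, (4 : ℤ) ∣ (t - (2 * |s| - k + 1)) → MemExt k I r (s + δ) (t - 1) →
    MemExt k I (r + ε) s (t + 1)

/-- A choice of directions for the positions with label in `S` along which these positions form
initial segments of the lines of the matrix. -/
structure IsDirection (j k : ℤ) (S : Set ℤ) (D : ℤ → ℤ → ℤ → ℤ → Prop) : Prop where
  ex : ∀ r s, (2 : ℤ) ∣ (r + s - (k + 1)) → |r| + |s| ≤ k - 1 → 3 * r + s + j ∈ S →
    ∃ ε δ, D r s ε δ
  unit : ∀ r s ε δ, D r s ε δ → (ε = 1 ∨ ε = -1) ∧ (δ = 1 ∨ δ = -1)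
  pos : ∀ r s ε δ, D r s ε δ →
    (2 : ℤ) ∣ (r + s - (k + 1)) ∧ |r| + |s| ≤ k - 1 ∧ 3 * r + s + j ∈ S
  initial : ∀ r s ε δ, D r s ε δ → |r - ε| + |s - δ| ≤ k - 1 → D (r - ε) (s - δ) ε δ

/-- The edge conditions hold in a good ideal: if the partial sum before the position `(r, s)`
vanishes but the one including it does not, the entry there is `1`, which produces a free element
over `(r, s)`. The induction runs along the line, on a bound `n` for the progress `ε * r + k`. -/
lemma edge_of_good {j k : ℤ} {S : Set ℤ} {D : ℤ → ℤ → ℤ → ℤ → Prop} (hD : IsDirection j k S D)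
    {I : Finset (ℤ × ℤ × ℤ)} (hI : I ∈ ideals k) (hg : IsGood j k S ↑I) (n : ℕ) :
    ∀ r s ε δ, D r s ε δ → ε * r + k ≤ n → EdgeZero k ↑I r s ε δ := by
  induction n with
  | zero =>
    intro r s ε δ h hn
    obtain ⟨hε, hδ⟩ := hD.unit _ _ _ _ h
    obtain ⟨-, hpos, -⟩ := hD.pos _ _ _ _ h
    exfalso
    rcases hε with rfl | rfl <;>
    · simp only [abs_eq_max_neg] at hpos
      omega
  | succ n ih =>
    intro r s ε δ h hn
    obtain ⟨hε, hδ⟩ := hD.unit _ _ _ _ h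
    obtain ⟨hrs, hpos, hcol⟩ := hD.pos _ _ _ _ h
    -- the edge before the position `(r, s)`
    have hprev : ∀ t, (4 : ℤ) ∣ (t - (2 * |s| - k + 1)) →
        MemExt k ↑I (r - ε) s (t - 3) → MemExt k ↑I r (s - δ) (t - 1) := by
      intro t ht he
      by_cases hin : |r - ε| + |s - δ| ≤ k - 1
      · have h' := hD.initial _ _ _ _ h hin
        have := ih _ _ _ _ h' (by rcases hε with rfl | rfl <;> push_cast at * <;> linarith) (t - 2)
          (by simp only [abs_eq_max_neg] at *; omega)
        simp only [sub_add_cancel] at this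
        rw [show t - 2 - 1 = t - 3 by ring, show t - 2 + 1 = t - 1 by ring] at this
        exact this he
      · left
        have := ext_range hI (by omega) he
        clear he
        simp only [abs_eq_max_neg] at *
        omega
    intro t ht hd
    by_contra hu
    have c1 : (4 : ℤ) ∣ (t - 1 - (2 * |s + δ| - k + 2)) := by
      simp only [abs_eq_max_neg] at *; omega
    have c2 : (4 : ℤ) ∣ (t + 3 - (2 * |s - δ| - k + 2)) := by
      simp only [abs_eq_max_neg] at *; omega
    have d2 : MemExt k ↑I r (s - δ) (t - 1) := by
      refine hprev t ht ?_
      have := ext_step hI (ε := -ε) (δ := -δ) (by omega) (by omega) (by omega) c1 hd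
      rw [show r + -ε = r - ε by ring, show s + δ + -δ = s by ring,
        show t - 1 - 2 = t - 3 by ring] at this
      exact this
    have u2 : ¬ MemExt k ↑I (r - ε) s (t + 1) := by
      intro he
      have h3 := hprev (t + 4) (by omega) (by rwa [show t + 4 - 3 = t + 1 by ring])
      rw [show t + 4 - 1 = t + 3 by ring] at h3
      have := ext_step hI (ε := ε) (δ := δ) hε hδ (by omega) c2 h3
      rw [show s - δ + δ = s by ring, show t + 3 - 2 = t + 1 by ring] at this
      exact hu this
    refine hg (r, s, t) hcol ?_
    rcases hε with rfl | rfl <;> rcases hδ with rfl | rfl <;>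
      (try simp only [sub_neg_eq_add, ← sub_eq_add_neg] at *) <;>
      apply isFree_of_ext hI <;> assumption

/-- Conversely the edge conditions preclude free elements with label in `S`: such an element would
have its lower neighbours in `I` and its upper neighbours outside `I`. -/
lemma good_of_edge {j k : ℤ} {S : Set ℤ} (hS : ∀ c ∈ S, ¬ (2 : ℤ) ∣ (c - j - k))
    {D : ℤ → ℤ → ℤ → ℤ → Prop} (hD : IsDirection j k S D)
    {I : Finset (ℤ × ℤ × ℤ)} (hI : I ∈ ideals k)
    (he : ∀ r s ε δ, D r s ε δ → EdgeZero k ↑I r s ε δ) : IsGood j k S ↑I := by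
  rintro ⟨r, s, t⟩ hc ⟨hP, hlow, hup⟩
  have hp := hS _ hc
  simp only at hc hp
  have hQ : (r, s, t) ∈ pentagramQ (k + 1) := by
    refine hP.resolve_left fun h => ?_
    simp only [pentagramQ, Set.mem_ofPred_eq] at h
    omega
  simp only [pentagramQ, Set.mem_ofPred_eq] at hQ
  obtain ⟨q1, q2, q3, q4, q5⟩ := hQ
  obtain ⟨ε, δ, h⟩ := hD.ex r s q2 (by omega) hc
  obtain ⟨hε, hδ⟩ := hD.unit _ _ _ _ h
  have hd : MemExt k ↑I r (s + δ) (t - 1) := by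
    by_cases hlo : t - 1 < 2 * |s + δ| - k + 2
    · exact Or.inl hlo
    right
    refine hlow _ (Or.inl ?_) ?_
    · simp only [pentagramQ, Set.mem_ofPred_eq, abs_eq_max_neg] at *
      omega
    · simp only [pentagramCovers, abs_eq_max_neg]
      omega
  rcases he _ _ _ _ h t (by omega) hd with h1 | h1
  · omega
  · refine hup (r + ε, s, t + 1) (((mem_ideals k I).1 hI).1 _ h1) ?_ h1
    rcases hε with rfl | rfl <;> simp [pentagramCovers]

lemma mem_Q_of_corner {k r s t ε : ℤ} (hε : ε = 1 ∨ ε = -1) (hrs : (2 : ℤ) ∣ (r + s - (k + 1)))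
    (ht : (4 : ℤ) ∣ (t - (2 * |s| - k + 1)))
    (hlo : 2 * |s| - k + 2 ≤ t + 1) (hhi : t + 1 < k + 2 - 2 * |r + ε|) :
    (r + ε, s, t + 1) ∈ pentagramQ k := by
  have h4 : (4 : ℤ) ∣ (t + 1 - (k - 2 - 2 * |r + ε|)) := by
    simp only [abs_eq_max_neg] at *
    omega
  simp only [pentagramQ, Set.mem_ofPred_eq]
  omega

/-- The ideal below a height function: at corners it consists of the elements below `H`, and an
element of `Q_{k+1}` belongs to it exactly when `H` forces it to. -/
lemma exists_ideal_of_height (k : ℤ) (H : ℤ → ℤ → ℤ)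
    (hlip : ∀ r s ε δ, (ε = 1 ∨ ε = -1) → (δ = 1 ∨ δ = -1) → (2 : ℤ) ∣ (r + s - k) →
      |r| + |s| ≤ k → |r + ε| + |s + δ| ≤ k → H r s - 2 ≤ H (r + ε) (s + δ)) :
    ∃ I ∈ ideals k, ∀ r s t, (2 : ℤ) ∣ (r + s - k) →
        ((r, s, t) ∈ I ↔ (r, s, t) ∈ pentagramP k ∧ t < H r s) := by
  let I := (pentagramPFinset k).filter (fun p =>
    if parQ k p then p.2.2 < H p.1 p.2.1
    else p.2.2 + 1 < H (p.1 + 1) p.2.1 ∨ p.2.2 + 1 < H (p.1 - 1) p.2.1)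
  have hIQ : ∀ r s t, (2 : ℤ) ∣ (r + s - k) →
      ((r, s, t) ∈ I ↔ (r, s, t) ∈ pentagramP k ∧ t < H r s) := by
    intro r s t h
    rw [Finset.mem_filter, mem_PFinset, if_pos (show parQ k (r, s, t) from h)]
  have hIQ' : ∀ r s t, ¬ (2 : ℤ) ∣ (r + s - k) →
      ((r, s, t) ∈ I ↔ (r, s, t) ∈ pentagramP k ∧
        (t + 1 < H (r + 1) s ∨ t + 1 < H (r - 1) s)) := by
    intro r s t h
    rw [Finset.mem_filter, mem_PFinset, if_neg (show ¬ parQ k (r, s, t) from h)]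
  have hI : I ∈ ideals k := by
    refine (mem_ideals k I).2 ⟨fun x hx => ?_, ?_⟩
    · rw [Finset.mem_filter, mem_PFinset] at hx
      exact hx.1
    · rintro ⟨r, s, t⟩ ⟨r', s', t'⟩ hy hx hc
      obtain ⟨rfl, hc⟩ := covers_cases hc
      by_cases hpar : (2 : ℤ) ∣ (r + s - k)
      · rw [hIQ' _ _ _ (by omega)] at hy
        rw [hIQ _ _ _ hpar]
        refine ⟨hx, ?_⟩
        obtain ⟨hyP, hy⟩ := hy
        have e : r' = r ∧ (s' = s + 1 ∨ s' = s - 1) ∧ |r'| + |s'| ≤ k - 1 ∧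
            |r| + |s| ≤ k := by
          clear hy
          rcases hx with hx | hx <;> rcases hyP with hyP | hyP <;>
          · simp only [pentagramQ, Set.mem_ofPred_eq, abs_eq_max_neg] at *
            omega
        obtain ⟨rfl, hs, hb, hb'⟩ := e
        have L : ∀ ε, (ε = 1 ∨ ε = -1) → H (r' + ε) s' - 2 ≤ H r' s := by
          intro ε hε
          have := hlip (r' + ε) s' (-ε) (s - s') (by omega) (by omega) (by omega)
            (by simp only [abs_eq_max_neg] at *; omega)
            (by rw [add_neg_cancel_right, add_sub_cancel]; exact hb')
          rwa [add_neg_cancel_right, add_sub_cancel] at this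
        have L1 := L 1 (Or.inl rfl)
        have L2 := L (-1) (Or.inr rfl)
        rw [← sub_eq_add_neg] at L2
        omega
      · rw [hIQ _ _ _ (by omega)] at hy
        rw [hIQ' _ _ _ hpar]
        refine ⟨hx, ?_⟩
        have e : (r' = r + 1 ∨ r' = r - 1) ∧ s' = s := by
          have hyP := hy.1
          clear hy
          rcases hx with hx | hx <;> rcases hyP with hyP | hyP <;>
          · simp only [pentagramQ, Set.mem_ofPred_eq, abs_eq_max_neg] at *
            omega
        obtain ⟨rfl | rfl, rfl⟩ := e
        · exact Or.inl hy.2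
        · exact Or.inr hy.2
  exact ⟨I, hI, hIQ⟩

/-- A height function satisfying the edge conditions gives `F|_S ≠ 0`. -/
lemma ne_zero_of_height (j k : ℤ) (S : Set ℤ) (hS : ∀ c ∈ S, ¬ (2 : ℤ) ∣ (c - j - k))
    (D : ℤ → ℤ → ℤ → ℤ → Prop) (hD : IsDirection j k S D) (H : ℤ → ℤ → ℤ)
    (hbd : ∀ r s, (2 : ℤ) ∣ (r + s - k) → |r| + |s| ≤ k →
      2 * |s| - k + 2 ≤ H r s ∧ H r s ≤ k + 2 - 2 * |r|)
    (hlip : ∀ r s ε δ, (ε = 1 ∨ ε = -1) → (δ = 1 ∨ δ = -1) → (2 : ℤ) ∣ (r + s - k) →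
      |r| + |s| ≤ k → |r + ε| + |s + δ| ≤ k → H r s - 2 ≤ H (r + ε) (s + δ))
    (hedge : ∀ r s ε δ, D r s ε δ → H r (s + δ) + 2 ≤ H (r + ε) s) :
    substNeg S (pentagramF j k) ≠ 0 := by
  have hchar : ∀ I ∈ ideals k,
      (IsGood j k S ↑I ↔ ∀ r s ε δ, D r s ε δ → EdgeZero k ↑I r s ε δ) := by
    intro I hI
    refine ⟨fun hg r s ε δ h => ?_, good_of_edge hS hD hI⟩
    exact edge_of_good hD hI hg (ε * r + k).toNat r s ε δ h (Int.self_le_toNat _)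
  refine ne_zero_of_good j k S hS ?_ ?_
  · obtain ⟨I, hI, hIQ⟩ := exists_ideal_of_height k H hlip
    refine ⟨I, hI, (hchar I hI).2 ?_⟩
    intro r s ε δ h t ht hd
    obtain ⟨hε, hδ⟩ := hD.unit _ _ _ _ h
    obtain ⟨hrs, hpos, -⟩ := hD.pos _ _ _ _ h
    have b1 := hbd r (s + δ) (by omega) (by simp only [abs_eq_max_neg] at *; omega)
    have b2 := hbd (r + ε) s (by omega) (by simp only [abs_eq_max_neg] at *; omega)
    have hlt : t - 1 < H r (s + δ) := by
      rcases hd with hd | hd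
      · omega
      · exact ((hIQ _ _ _ (by omega)).1 hd).2
    have he := hedge _ _ _ _ h
    by_cases hlo : t + 1 < 2 * |s| - k + 2
    · exact Or.inl hlo
    refine Or.inr ((hIQ _ _ _ (by omega)).2 ⟨Or.inl ?_, by omega⟩)
    exact mem_Q_of_corner hε hrs ht (by omega) (by omega)
  · intro I hI I' hI' hg hg'
    rw [hchar _ (inter_mem_ideals k I I' hI hI')]
    rw [hchar _ hI] at hg
    rw [hchar _ hI'] at hg'
    intro r s ε δ h t ht hd
    have e : ∀ r s t, MemExt k ↑(I ∩ I') r s t ↔ MemExt k ↑I r s t ∧ MemExt k ↑I' r s t := by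
      intro r s t
      simp only [MemExt, Finset.coe_inter, Set.mem_inter_iff]
      tauto
    rw [e] at hd ⊢
    exact ⟨hg _ _ _ _ h t ht hd.1, hg' _ _ _ _ h t ht hd.2⟩

/-- The same criterion in terms of the corner sums `C i b` (sum of the entries in the first `i`
rows and first `b` columns) of a `k × k` alternating sign matrix. The position `(r, s)` is the
entry in row `a + 1` and column `b + 1`, where `2a = r + s + k - 1` and `2b = r - s + k - 1`. -/
lemma ne_zero_of_cornerSum (j k : ℤ) (S : Set ℤ) (hS : ∀ c ∈ S, ¬ (2 : ℤ) ∣ (c - j - k))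
    (D : ℤ → ℤ → ℤ → ℤ → Prop) (hD : IsDirection j k S D) (C : ℤ → ℤ → ℤ)
    (hbd : ∀ i b, 0 ≤ i → i ≤ k → 0 ≤ b → b ≤ k →
      0 ≤ C i b ∧ i + b - k ≤ C i b ∧ C i b ≤ i ∧ C i b ≤ b)
    (hrow : ∀ i b, 0 ≤ i → i < k → 0 ≤ b → b ≤ k →
      C i b ≤ C (i + 1) b ∧ C (i + 1) b ≤ C i b + 1)
    (hcol : ∀ i b, 0 ≤ i → i ≤ k → 0 ≤ b → b < k →
      C i b ≤ C i (b + 1) ∧ C i (b + 1) ≤ C i b + 1)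
    (h11 : ∀ a b, D (a + b - k + 1) (a - b) 1 1 → C (a + 1) (b + 1) ≤ C (a + 1) b)
    (h00 : ∀ a b, D (a + b - k + 1) (a - b) (-1) (-1) → C a b + 1 ≤ C a (b + 1))
    (h10 : ∀ a b, D (a + b - k + 1) (a - b) 1 (-1) → C (a + 1) (b + 1) ≤ C a (b + 1))
    (h01 : ∀ a b, D (a + b - k + 1) (a - b) (-1) 1 → C a b + 1 ≤ C (a + 1) b) :
    substNeg S (pentagramF j k) ≠ 0 := by
  let H : ℤ → ℤ → ℤ := fun r s => 2 * r + k + 2 - 4 * C ((r + s + k) / 2) ((r - s + k) / 2)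
  have hH : ∀ r s i b, r = i + b - k → s = i - b → H r s = 2 * r + k + 2 - 4 * C i b := by
    rintro r s i b rfl rfl
    simp only [H]
    rw [show (i + b - k + (i - b) + k) / 2 = i by omega,
      show (i + b - k - (i - b) + k) / 2 = b by omega]
  refine ne_zero_of_height j k S hS D hD H ?_ ?_ ?_
  · intro r s h1 h2
    obtain ⟨i, b, hr, hs⟩ : ∃ i b, r = i + b - k ∧ s = i - b :=
      ⟨(r + s + k) / 2, (r - s + k) / 2, by omega, by omega⟩
    rw [hH r s i b hr hs]
    have := hbd i b
    simp only [abs_eq_max_neg] at *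
    omega
  · intro r s ε δ hε hδ h1 h2 h3
    obtain ⟨i, b, hr, hs⟩ : ∃ i b, r = i + b - k ∧ s = i - b :=
      ⟨(r + s + k) / 2, (r - s + k) / 2, by omega, by omega⟩
    rw [hH r s i b hr hs]
    simp only [abs_eq_max_neg] at h2 h3
    rcases hε with rfl | rfl <;> rcases hδ with rfl | rfl
    · rw [hH _ _ (i + 1) b (by omega) (by omega)]
      have := hrow i b
      omega
    · rw [hH _ _ i (b + 1) (by omega) (by omega)]
      have := hcol i b
      omega
    · rw [hH _ _ i (b - 1) (by omega) (by omega)]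
      have := hcol i (b - 1)
      rw [sub_add_cancel] at this
      omega
    · rw [hH _ _ (i - 1) b (by omega) (by omega)]
      have := hrow (i - 1) b
      rw [sub_add_cancel] at this
      omega
  · intro r s ε δ h
    obtain ⟨hε, hδ⟩ := hD.unit _ _ _ _ h
    obtain ⟨hrs, -, -⟩ := hD.pos _ _ _ _ h
    obtain ⟨a, b, rfl, rfl⟩ : ∃ a b, r = a + b - k + 1 ∧ s = a - b :=
      ⟨(r + s + k - 1) / 2, (r - s + k - 1) / 2, by omega, by omega⟩
    rcases hε with rfl | rfl <;> rcases hδ with rfl | rfl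
    · rw [hH _ _ (a + 1) b (by omega) (by omega), hH _ _ (a + 1) (b + 1) (by omega) (by omega)]
      have := h11 a b h
      omega
    · rw [hH _ _ a (b + 1) (by omega) (by omega), hH _ _ (a + 1) (b + 1) (by omega) (by omega)]
      have := h10 a b h
      omega
    · rw [hH _ _ (a + 1) b (by omega) (by omega), hH _ _ a b (by omega) (by omega)]
      have := h01 a b h
      omega
    · rw [hH _ _ a (b + 1) (by omega) (by omega), hH _ _ a b (by omega) (by omega)]
      have := h00 a b h
      omega

/-! ### The two kinds of forbidden regions -/

/-- Step-four progressions, with `l = 2m - k - 1`. Numbering rows and columns from `0`, the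
forbidden positions lie in the columns `b ≡ m (mod 2)`: all but the first `(m - b) / 2` rows if
`b < m`, all but the last `(b - m) / 2 + 1` rows if `b ≥ m`. The corner sums chosen below make the
column partial sums vanish there, from the bottom in the first case, from the top in the second. -/
lemma ne_zero_step_four (j k l : ℤ) (hl : |l| ≤ k + 1)
    (hpar : (2 : ℤ) ∣ (l - (k + 1))) :
    substNeg (AP (j + l - 2 * k + 4) (j + l + 2 * k - 4) 4) (pentagramF j k) ≠ 0 := by
  obtain ⟨m, rfl⟩ : ∃ m, l = 2 * m - k - 1 := ⟨(l + k + 1) / 2, by omega⟩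
  have hm : 0 ≤ m ∧ m ≤ k + 1 := by
    simp only [abs_eq_max_neg] at hl
    omega
  clear hl hpar
  refine ne_zero_of_cornerSum j k _ ?_ (fun r s ε δ =>
      ((2 : ℤ) ∣ (r + s - (k + 1)) ∧ |r| + |s| ≤ k - 1 ∧
        3 * r + s + j ∈ AP (j + (2 * m - k - 1) - 2 * k + 4) (j + (2 * m - k - 1) + 2 * k - 4) 4) ∧
      ((r - s < 2 * m - k - 1 ∧ ε = -1 ∧ δ = -1) ∨ (2 * m - k - 1 ≤ r - s ∧ ε = 1 ∧ δ = 1))) ?_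
    (fun i b => if b ≤ m then min b (max 0 (i - (m - b) / 2))
      else min i (max ((b + m) / 2) (i + b - k))) ?_ ?_ ?_ ?_ ?_ ?_ ?_
  · intro c hc
    simp only [AP, Set.mem_ofPred_eq] at hc
    omega
  · constructor
    · intro r s h1 h2 h3
      by_cases h : r - s < 2 * m - k - 1
      · exact ⟨-1, -1, ⟨h1, h2, h3⟩, Or.inl ⟨h, rfl, rfl⟩⟩
      · exact ⟨1, 1, ⟨h1, h2, h3⟩, Or.inr ⟨by omega, rfl, rfl⟩⟩
    · rintro r s ε δ ⟨-, h⟩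
      omega
    · rintro r s ε δ ⟨h, -⟩
      exact h
    · rintro r s ε δ ⟨⟨h1, h2, h3⟩, h⟩ h4
      refine ⟨⟨by omega, h4, ?_⟩, by omega⟩
      simp only [AP, Set.mem_ofPred_eq, abs_eq_max_neg] at *
      omega
  · intro i b _ _ _ _
    split_ifs <;> omega
  · intro i b _ _ _ _
    split_ifs <;> omega
  · intro i b _ _ _ _
    split_ifs <;> omega
  · rintro a b ⟨⟨-, h2, h3⟩, h⟩
    simp only [AP, Set.mem_ofPred_eq, abs_eq_max_neg] at h2 h3
    split_ifs <;> omega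
  · rintro a b ⟨⟨-, h2, h3⟩, h⟩
    simp only [AP, Set.mem_ofPred_eq, abs_eq_max_neg] at h2 h3
    split_ifs <;> omega
  · rintro a b ⟨-, h⟩
    omega
  · rintro a b ⟨-, h⟩
    omega

/-- Step-two progressions `[u, v]_2`. The first `p` rows have their forbidden entries at the
right end, the remaining rows at the left end; the corner sums used are those of the permutation
matrix sending rows `p, p - 1, …, 1` to columns `1, …, p` and rows `p + 1, …, k` to columns
`k, …, p + 1`. -/
lemma ne_zero_step_two (j k u v p : ℤ)
    (hu : (2 : ℤ) ∣ (u - j - (k + 1))) (hp0 : 0 ≤ p) (hpk : p ≤ k)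
    -- `a'` is twice the offset of a row from the middle one
    (hupper : ∀ a', (2 : ℤ) ∣ (a' - (k - 1)) → a' ≤ 2 * p - k - 1 →
      k - 1 ≤ v - j - 2 * a' ∧ 2 * p - 2 * k - a' ≤ u - j - 2 * a' - 2)
    (hlower : ∀ a', (2 : ℤ) ∣ (a' - (k - 1)) → 2 * p - k - 1 < a' →
      u - j - 2 * a' ≤ -(k - 1) ∧ v - j - 2 * a' + 2 ≤ 2 * p - a') :
    substNeg (AP u v 2) (pentagramF j k) ≠ 0 := by
  refine ne_zero_of_cornerSum j k _ ?_ (fun r s ε δ =>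
      ((2 : ℤ) ∣ (r + s - (k + 1)) ∧ |r| + |s| ≤ k - 1 ∧ 3 * r + s + j ∈ AP u v 2) ∧
      ((r + s ≤ 2 * p - k - 1 ∧ ε = -1 ∧ δ = 1) ∨ (2 * p - k - 1 < r + s ∧ ε = 1 ∧ δ = -1))) ?_
    (fun i b => if i ≤ p then (if b ≤ p then max 0 (i + b - p) else i)
      else (if b ≤ p then b else max p (i + b - k))) ?_ ?_ ?_ ?_ ?_ ?_ ?_
  · intro c hc
    simp only [AP, Set.mem_ofPred_eq] at hc
    omega
  · constructor
    · intro r s h1 h2 h3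
      by_cases h : r + s ≤ 2 * p - k - 1
      · exact ⟨-1, 1, ⟨h1, h2, h3⟩, Or.inl ⟨h, rfl, rfl⟩⟩
      · exact ⟨1, -1, ⟨h1, h2, h3⟩, Or.inr ⟨by omega, rfl, rfl⟩⟩
    · rintro r s ε δ ⟨-, h⟩
      omega
    · rintro r s ε δ ⟨h, -⟩
      exact h
    · rintro r s ε δ ⟨⟨h1, h2, h3⟩, h⟩ h4
      refine ⟨⟨by omega, h4, ?_⟩, by omega⟩
      have e1 := hupper (r + s) (by omega)
      have e2 := hlower (r + s) (by omega)
      simp only [AP, Set.mem_ofPred_eq, abs_eq_max_neg] at *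
      omega
  · intro i b _ _ _ _
    clear hupper hlower hu
    split_ifs <;> omega
  · intro i b _ _ _ _
    clear hupper hlower hu
    split_ifs <;> omega
  · intro i b _ _ _ _
    clear hupper hlower hu
    split_ifs <;> omega
  · rintro a b ⟨-, h⟩
    omega
  · rintro a b ⟨-, h⟩
    omega
  · rintro a b ⟨⟨-, h2, h3⟩, h⟩
    have e2 := hlower (2 * a - k + 1) (by omega) (by omega)
    simp only [AP, Set.mem_ofPred_eq, abs_eq_max_neg] at h2 h3
    clear hupper hlower hu
    split_ifs <;> omega
  · rintro a b ⟨⟨-, h2, h3⟩, h⟩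
    have e2 := hupper (2 * a - k + 1) (by omega) (by omega)
    simp only [AP, Set.mem_ofPred_eq, abs_eq_max_neg] at h2 h3
    clear hupper hlower hu
    split_ifs <;> omega


theorem stmt3 (j k l : ℤ) (hk : 1 ≤ k) (hl : |l| ≤ k + 1) (hpar : (2 : ℤ) ∣ (l - (k + 1)))
    (S : Set ℤ)
    (hS : S = AP (j + l - 2 * k + 4) (j + l + 2 * k - 4) 4 ∨
          S = AP (j + l - 2 * k + 2) (j + l + pentagramSigma k l - 2) 2 ∨
          S = AP (j + l + pentagramSigma k l + 2) (j + l + 2 * k - 2) 2) :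
    substNeg S (pentagramF j k) ≠ 0 := by
  have hl' : -(k + 1) ≤ l ∧ l ≤ k + 1 := abs_le.1 hl
  have hσ : (k % 2 = 1 ∧ pentagramSigma k l = 0) ∨
      (k % 2 = 0 ∧ (l + k) % 4 = 1 ∧ pentagramSigma k l = -2) ∨
      (k % 2 = 0 ∧ (l + k) % 4 = 3 ∧ pentagramSigma k l = 2) := by
    unfold pentagramSigma
    split_ifs <;> omega
  generalize pentagramSigma k l = σ at *
  rcases hS with rfl | rfl | rfl
  · exact ne_zero_step_four j k l hl hpar
  -- in both cases `p` counts the rows whose partial sums are taken from the right end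
  · refine ne_zero_step_two j k _ _ ((l + k + 1) / 4) (by omega) (by omega) (by omega) ?_ ?_ <;>
    · intro a' h1 h2
      omega
  · refine ne_zero_step_two j k _ _ ((l + 3 * k + 1) / 4) (by omega) (by omega) (by omega)
      ?_ ?_ <;>
    · intro a' h1 h2
      omega

end
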